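/- Let 0 < α ≤ 1. There exists a constant C > 0 (depending only on α) such that for all λ > 0 and T > 0, ∫_0^T t^{α-1} |E_{α,α}(-λ t^α)| dt ≤ C T^α / α. -/

import Mathlib

open Real intervalIntegral

/-- The two-parameter Mittag-Leffler function (real arguments),
with the convention `1/Γ = 0` at the poles of `Γ` (as in Mathlib's `Real.Gamma`). -/
noncomputable def mittagLeffler (α β x : ℝ) : ℝ :=
  ∑' k : ℕ, x ^ k / Real.Gamma ((k : ℝ) * α + β)

/-!
Put `a t = t ^ (α - 1)` and `u t = t ^ (α - 1) * E_{α,α}(-t ^ α)`. Integrating the series of `u`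
against `a (t - s)` term by term with the Beta integral gives the Volterra equation
`Γ(α) u(t) + ∫₀ᵗ u(s) a(t - s) ds = a(t)`. As `α ≤ 1`, the kernel `a` is log-convex, and this
forces `u > 0`: at a first zero `t₀` of `u`, subtracting a suitable multiple of the equation at
a nearby earlier time `m` bounds `u(m)` by the part of the convolution over `[m, t₀]`, which is too
small. Positivity of `u` in turn makes the convolution nonnegative, so `Γ(α) u ≤ a`, that is,
`0 < E_{α,α}(-x) ≤ 1/Γ(α)` for every `x > 0`.
-/

open MeasureTheory Set Filter Topology

/-! ### Log-convex functions -/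

theorem map_add_add_map_le_of_convexOn {𝕜 : Type*} [Field 𝕜] [LinearOrder 𝕜]
    [IsStrictOrderedRing 𝕜] {S : Set 𝕜} {f : 𝕜 → 𝕜} (hf : ConvexOn 𝕜 S f) {x y h : 𝕜} (hx : x ∈ S)
    (hyh : y + h ∈ S) (hxy : x ≤ y) (hh : 0 ≤ h) :
    f (x + h) + f y ≤ f x + f (y + h) := by
  rcases hh.eq_or_lt with rfl | hh
  · simp only [add_zero, le_refl]
  have hd : 0 < y - x + h := by linarith
  set w := h / (y - x + h) with hw
  have hw0 : 0 ≤ w := by positivity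
  have hw1 : 0 ≤ 1 - w := by
    rw [sub_nonneg, hw, div_le_one hd]
    linarith
  have h_left := hf.2 hx hyh hw1 hw0 (by ring)
  have h_right := hf.2 hx hyh hw0 hw1 (by ring)
  have h_left_point : (1 - w) • x + w • (y + h) = x + h := by
    simp only [smul_eq_mul, hw]
    field_simp
    ring
  have h_right_point : w • x + (1 - w) • (y + h) = y := by
    simp only [smul_eq_mul, hw]
    field_simp
    ring
  rw [h_left_point, smul_eq_mul, smul_eq_mul] at h_left
  rw [h_right_point, smul_eq_mul, smul_eq_mul] at h_right
  linarith

section LogConvex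

variable {a : ℝ → ℝ} (ha_pos : ∀ s, 0 < s → 0 < a s)
  (ha_log : ConvexOn ℝ (Ioi 0) fun s => log (a s))

include ha_pos ha_log

theorem mul_le_mul_of_convexOn_log {x y h : ℝ} (hx : 0 < x) (hxy : x ≤ y) (hh : 0 ≤ h) :
    a (x + h) * a y ≤ a x * a (y + h) := by
  have hax := ha_pos x hx
  have hay := ha_pos y (by linarith)
  have haxh := ha_pos (x + h) (by linarith)
  have hayh := ha_pos (y + h) (by linarith)
  rw [← log_le_log_iff (by positivity) (by positivity), log_mul haxh.ne' hay.ne',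
    log_mul hax.ne' hayh.ne']
  exact map_add_add_map_le_of_convexOn ha_log hx (show 0 < y + h by linarith) hxy hh

theorem continuousOn_of_convexOn_log : ContinuousOn a (Ioi 0) :=
  (ha_log.continuousOn isOpen_Ioi).rexp.congr fun s hs => (exp_log (ha_pos s hs)).symm

theorem eventually_mul_primitive_lt {c t : ℝ} (hc : 0 < c) (ht : 0 < t)
    (ha_int : IntervalIntegrable a volume 0 t) :
    ∀ᶠ m in 𝓝[<] t, a m * ∫ s in 0..t - m, a s < c * a t := by
  have h_prim : Tendsto (fun δ => ∫ s in 0..δ, a s) (𝓝[Icc 0 t] 0) (𝓝 0) := by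
    have := continuousOn_primitive_interval' ha_int left_mem_uIcc 0 left_mem_uIcc
    rwa [ContinuousWithinAt, integral_same, uIcc_of_le ht.le] at this
  have h_sub : Tendsto (fun m => t - m) (𝓝[<] t) (𝓝[Icc 0 t] 0) := by
    refine tendsto_nhdsWithin_iff.2 ⟨?_, ?_⟩
    · have : Tendsto (fun m => t - m) (𝓝 t) (𝓝 (t - t)) := tendsto_const_nhds.sub tendsto_id
      rw [sub_self] at this
      exact this.mono_left nhdsWithin_le_nhds
    · filter_upwards [Ioo_mem_nhdsLT ht] with m hm
      exact ⟨by linarith [hm.2], by linarith [hm.1]⟩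
  have ha_cont : Tendsto a (𝓝[<] t) (𝓝 (a t)) :=
    ((continuousOn_of_convexOn_log ha_pos ha_log).continuousAt (Ioi_mem_nhds ht)).mono_left
      nhdsWithin_le_nhds
  have h_lim := ha_cont.mul (h_prim.comp h_sub)
  rw [mul_zero] at h_lim
  exact h_lim.eventually_lt_const (mul_pos hc (ha_pos t ht))

end LogConvex

/-! ### Volterra equations with log-convex kernel -/

theorem exists_first_nonpos {u : ℝ → ℝ} (hu : ContinuousOn u (Ioi 0))
    (hu_zero : ∀ᶠ t in 𝓝[>] 0, 0 < u t) {t : ℝ} (ht : 0 < t) (hut : u t ≤ 0) :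
    ∃ t₀, 0 < t₀ ∧ u t₀ ≤ 0 ∧ ∀ s ∈ Ioo 0 t₀, 0 < u s := by
  obtain ⟨ε, hε, hu_ε⟩ := mem_nhdsGT_iff_exists_Ioo_subset.1 hu_zero
  have hε : 0 < ε := hε
  have hεt : ε ≤ t := not_lt.1 fun h => hut.not_gt (hu_ε ⟨ht, h⟩)
  have h_compact : IsCompact (Icc ε t ∩ u ⁻¹' Iic 0) :=
    isCompact_Icc.of_isClosed_subset
      ((hu.mono fun s hs => hε.trans_le hs.1).preimage_isClosed_of_isClosed isClosed_Icc
        isClosed_Iic) inter_subset_left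
  obtain ⟨t₀, ⟨ht₀, hut₀⟩, h_least⟩ := h_compact.exists_isLeast ⟨t, ⟨hεt, le_rfl⟩, hut⟩
  refine ⟨t₀, hε.trans_le ht₀.1, hut₀, fun s hs => ?_⟩
  by_contra! hus
  have hεs : ε ≤ s := not_lt.1 fun h => hus.not_gt (hu_ε ⟨hs.1, h⟩)
  exact hs.2.not_ge (h_least ⟨⟨hεs, hs.2.le.trans ht₀.2⟩, hus⟩)

/-- `u` is a resolvent kernel of `a`: it solves the Volterra equation of the second kind
`c u + a * u = a` on `(0, ∞)`, where `*` is convolution on the half-line. Integrability is part of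
the notion, since the integral of a non-integrable function is `0` by convention. -/
structure IsVolterraResolvent (c : ℝ) (a u : ℝ → ℝ) : Prop where
  intervalIntegrable : ∀ t, 0 < t → IntervalIntegrable (fun s => u s * a (t - s)) volume 0 t
  add_integral_eq : ∀ t, 0 < t → c * u t + ∫ s in 0..t, u s * a (t - s) = a t

namespace IsVolterraResolvent

variable {c : ℝ} {a u : ℝ → ℝ}

theorem mul_le_kernel (h : IsVolterraResolvent c a u) (ha : ∀ s, 0 < s → 0 ≤ a s) {t : ℝ}
    (ht : 0 < t) (hu : ∀ s ∈ Ioo 0 t, 0 ≤ u s) : c * u t ≤ a t := by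
  have h_conv : 0 ≤ ∫ s in 0..t, u s * a (t - s) := by
    rw [integral_of_le ht.le, integral_Ioc_eq_integral_Ioo]
    exact setIntegral_nonneg measurableSet_Ioo fun s hs =>
      mul_nonneg (hu s hs) (ha _ (sub_pos.2 hs.2))
  linarith [h.add_integral_eq t ht]

theorem kernel_mul_le (h : IsVolterraResolvent c a u) (ha_pos : ∀ s, 0 < s → 0 < a s)
    (ha_log : ConvexOn ℝ (Ioi 0) fun s => log (a s)) {m t : ℝ} (hm : 0 < m) (hmt : m ≤ t)
    (hu : ∀ s ∈ Ioo 0 m, 0 ≤ u s) :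
    c * (a t * u m) ≤ a m * ((∫ s in m..t, u s * a (t - s)) + c * u t) := by
  have ht : 0 < t := hm.trans_le hmt
  have h_int := h.intervalIntegrable t ht
  have hm_mem : m ∈ uIcc 0 t := by
    rw [uIcc_of_le ht.le]
    exact ⟨hm.le, hmt⟩
  have h_int_left := h_int.mono_set (uIcc_subset_uIcc_left hm_mem)
  have h_int_right := h_int.mono_set (uIcc_subset_uIcc_right hm_mem)
  -- By log-convexity, `a (t - s) / a (m - s) ≤ a t / a m` for `0 < s < m`.
  have h_compare :
      a m * ∫ s in 0..m, u s * a (t - s) ≤ a t * ∫ s in 0..m, u s * a (m - s) := by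
    rw [← intervalIntegral.integral_const_mul, ← intervalIntegral.integral_const_mul]
    refine integral_mono_on_of_le_Ioo hm.le (h_int_left.const_mul _)
      ((h.intervalIntegrable m hm).const_mul _) fun s hs => ?_
    have h_kernel := mul_le_mul_of_convexOn_log ha_pos ha_log (sub_pos.2 hs.2)
      (sub_le_self m hs.1.le) (sub_nonneg.2 hmt)
    rw [show m - s + (t - m) = t - s by ring, add_sub_cancel] at h_kernel
    linarith [mul_le_mul_of_nonneg_left h_kernel (hu s hs)]
  calc c * (a t * u m) = a m * a t - a t * ∫ s in 0..m, u s * a (m - s) := by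
        linear_combination a t * h.add_integral_eq m hm
    _ ≤ a m * a t - a m * ∫ s in 0..m, u s * a (t - s) := by linarith
    _ = a m * ((∫ s in m..t, u s * a (t - s)) + c * u t) := by
        rw [← h.add_integral_eq t ht, ← integral_add_adjacent_intervals h_int_left h_int_right]
        ring

theorem integral_mul_kernel_le (h : IsVolterraResolvent c a u) (ha : ∀ s, 0 < s → 0 ≤ a s)
    {m t M : ℝ} (hm : 0 < m) (hmt : m ≤ t) (ha_int : IntervalIntegrable a volume 0 (t - m))
    (hu : ∀ s ∈ Icc m t, u s ≤ M) :
    ∫ s in m..t, u s * a (t - s) ≤ M * ∫ s in 0..t - m, a s := by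
  have ht : 0 < t := hm.trans_le hmt
  have h_int : IntervalIntegrable (fun s => u s * a (t - s)) volume m t := by
    refine (h.intervalIntegrable t ht).mono_set (uIcc_subset_uIcc_right ?_)
    rw [uIcc_of_le ht.le]
    exact ⟨hm.le, hmt⟩
  have ha_int_sub : IntervalIntegrable (fun s => a (t - s)) volume m t := by
    simpa only [sub_zero, sub_sub_cancel] using (ha_int.comp_sub_left t).symm
  calc ∫ s in m..t, u s * a (t - s) ≤ ∫ s in m..t, M * a (t - s) :=
        integral_mono_on_of_le_Ioo hmt h_int (ha_int_sub.const_mul M) fun s hs =>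
          mul_le_mul_of_nonneg_right (hu s (Ioo_subset_Icc_self hs)) (ha _ (sub_pos.2 hs.2))
    _ = M * ∫ s in 0..t - m, a s := by
        rw [intervalIntegral.integral_const_mul, integral_comp_sub_left, sub_self]

theorem pos (h : IsVolterraResolvent c a u) (hc : 0 < c) (ha_pos : ∀ s, 0 < s → 0 < a s)
    (ha_log : ConvexOn ℝ (Ioi 0) fun s => log (a s))
    (ha_int : ∀ t, 0 < t → IntervalIntegrable a volume 0 t) (hu : ContinuousOn u (Ioi 0))
    (hu_zero : ∀ᶠ t in 𝓝[>] 0, 0 < u t) {t : ℝ} (ht : 0 < t) : 0 < u t := by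
  by_contra! hut
  obtain ⟨t₀, ht₀, hut₀, hu_pos⟩ := exists_first_nonpos hu hu_zero ht hut
  obtain ⟨b, hbt₀, hb⟩ : ∃ b < t₀, ∀ m ∈ Ico b t₀,
      0 < m ∧ a m * ∫ s in 0..t₀ - m, a s < c * a t₀ :=
    mem_nhdsLT_iff_exists_Ico_subset.1 <| Filter.Eventually.and
      (mem_of_superset (Ioo_mem_nhdsLT ht₀) fun _ hm => hm.1)
      (eventually_mul_primitive_lt ha_pos ha_log hc ht₀ (ha_int t₀ ht₀))
  obtain ⟨m, hm_mem, hm_max⟩ := isCompact_Icc.exists_isMaxOn (nonempty_Icc.2 hbt₀.le)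
    (hu.mono fun s hs => (hb b ⟨le_rfl, hbt₀⟩).1.trans_le hs.1)
  have hum : 0 < u m :=
    (hu_pos b ⟨(hb b ⟨le_rfl, hbt₀⟩).1, hbt₀⟩).trans_le (hm_max (left_mem_Icc.2 hbt₀.le))
  have hmt₀ : m < t₀ := hm_mem.2.lt_of_ne fun heq => (heq ▸ hum).not_ge hut₀
  obtain ⟨hm, h_small⟩ := hb m ⟨hm_mem.1, hmt₀⟩
  have h_lower := h.kernel_mul_le ha_pos ha_log hm hmt₀.le fun s hs =>
    (hu_pos s ⟨hs.1, hs.2.trans hmt₀⟩).le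
  have h_upper := h.integral_mul_kernel_le (fun s hs => (ha_pos s hs).le) hm hmt₀.le
    (ha_int _ (sub_pos.2 hmt₀)) fun s hs => hm_max ⟨hm_mem.1.trans hs.1, hs.2⟩
  refine lt_irrefl (c * (a t₀ * u m)) ?_
  calc c * (a t₀ * u m) ≤ a m * ((∫ s in m..t₀, u s * a (t₀ - s)) + c * u t₀) := h_lower
    _ ≤ a m * (u m * (∫ s in 0..t₀ - m, a s) + 0) := by
        have := (ha_pos m hm).le
        have := mul_nonpos_of_nonneg_of_nonpos hc.le hut₀
        gcongr
    _ = a m * (∫ s in 0..t₀ - m, a s) * u m := by ring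
    _ < c * a t₀ * u m := by gcongr
    _ = c * (a t₀ * u m) := by ring

end IsVolterraResolvent

/-! ### The Mittag-Leffler function -/

theorem rpow_mul_exp_neg_le_Gamma {A s : ℝ} (hA : 0 < A) (hs : 1 ≤ s) :
    A ^ (s - 1) * exp (-A) ≤ Gamma s := by
  have hs_pos : 0 < s := by linarith
  have h_int := GammaIntegral_convergent hs_pos
  have h_sub : Ioi A ⊆ Ioi 0 := Ioi_subset_Ioi hA.le
  calc A ^ (s - 1) * exp (-A) = ∫ x in Ioi A, exp (-x) * A ^ (s - 1) := by
        rw [MeasureTheory.integral_mul_const, integral_exp_neg_Ioi, mul_comm]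
    _ ≤ ∫ x in Ioi A, exp (-x) * x ^ (s - 1) :=
        setIntegral_mono_on ((integrableOn_exp_neg_Ioi A).mul_const _) (h_int.mono_set h_sub)
          measurableSet_Ioi fun x hx => mul_le_mul_of_nonneg_left
            (rpow_le_rpow hA.le (le_of_lt hx) (by linarith)) (exp_pos _).le
    _ ≤ ∫ x in Ioi 0, exp (-x) * x ^ (s - 1) := by
        refine setIntegral_mono_set h_int ?_ h_sub.eventuallyLE
        filter_upwards [ae_restrict_mem measurableSet_Ioi] with x hx
        exact mul_nonneg (exp_pos _).le (rpow_nonneg (le_of_lt hx) _)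
    _ = Gamma s := (Gamma_eq_integral hs_pos).symm

theorem mittagLeffler_zero (α β : ℝ) : mittagLeffler α β 0 = 1 / Gamma β := by
  rw [mittagLeffler, tsum_eq_single 0 fun k hk => by rw [zero_pow hk, zero_div], pow_zero,
    Nat.cast_zero, zero_mul, zero_add]

section Series

variable {α : ℝ} (hα : 0 < α)

include hα

theorem summable_pow_div_Gamma (β x : ℝ) :
    Summable fun k : ℕ => x ^ k / Gamma (k * α + β) := by
  -- With `A ^ α = |x| + 1`, the Gamma bound makes the terms `O((|x| / (|x| + 1)) ^ k)`.
  set A : ℝ := (|x| + 1) ^ α⁻¹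
  have hA : 0 < A := by positivity
  have hAα : A ^ α = |x| + 1 := rpow_inv_rpow (by positivity) hα.ne'
  set q : ℝ := A ^ (β - 1) * exp (-A)
  have : 0 < q := by positivity
  have h_geom : Summable fun k : ℕ => (|x| / (|x| + 1)) ^ k * q⁻¹ :=
    (summable_geometric_of_lt_one (by positivity)
      ((div_lt_one (by positivity)).2 (lt_add_one _))).mul_right _
  refine h_geom.of_norm_bounded_eventually_nat ?_
  have h_large : ∀ᶠ k : ℕ in atTop, 1 ≤ k * α + β :=
    (tendsto_atTop_add_const_right atTop β
      (tendsto_natCast_atTop_atTop.atTop_mul_const hα)).eventually_ge_atTop 1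
  filter_upwards [h_large] with k hk
  have h_Gamma : (|x| + 1) ^ k * q ≤ Gamma (k * α + β) :=
    calc (|x| + 1) ^ k * q = A ^ (k * α + β - 1) * exp (-A) := by
          rw [show k * α + β - 1 = α * k + (β - 1) by ring, rpow_add hA, rpow_mul hA.le, hAα,
            rpow_natCast, mul_assoc]
      _ ≤ Gamma (k * α + β) := rpow_mul_exp_neg_le_Gamma hA hk
  have h_Gamma_pos : 0 < Gamma (k * α + β) := Gamma_pos_of_pos (by linarith)
  calc ‖x ^ k / Gamma (k * α + β)‖ = |x| ^ k / Gamma (k * α + β) := by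
        rw [norm_div, norm_pow, norm_eq_abs, norm_of_nonneg h_Gamma_pos.le]
    _ ≤ |x| ^ k / ((|x| + 1) ^ k * q) := by gcongr
    _ = (|x| / (|x| + 1)) ^ k * q⁻¹ := by rw [div_pow, div_mul_eq_div_div, div_eq_mul_inv _ q]

theorem continuous_mittagLeffler (β : ℝ) : Continuous (mittagLeffler α β) := by
  refine continuous_iff_continuousAt.2 fun x => ?_
  have h_ball : ContinuousOn (mittagLeffler α β) (Metric.closedBall 0 (|x| + 1)) := by
    refine continuousOn_tsum (fun k => by fun_prop)
      (summable_pow_div_Gamma hα β (|x| + 1)).norm fun k y hy => ?_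
    rw [norm_div, norm_div, norm_pow, norm_pow, norm_of_nonneg (by positivity : 0 ≤ |x| + 1)]
    have hy : ‖y‖ ≤ |x| + 1 := mem_closedBall_zero_iff.1 hy
    gcongr
  exact h_ball.continuousAt (Metric.closedBall_mem_nhds_of_mem (by simp))

theorem continuous_mittagLeffler_mul_rpow (β lam : ℝ) :
    Continuous fun t : ℝ => mittagLeffler α β (lam * t ^ α) :=
  (continuous_mittagLeffler hα β).comp (continuous_const.mul (continuous_rpow_const hα.le))

theorem mittagLeffler_eq_add (β x : ℝ) :
    mittagLeffler α β x = 1 / Gamma β + x * mittagLeffler α (β + α) x := by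
  rw [mittagLeffler, (summable_pow_div_Gamma hα β x).tsum_eq_zero_add, mittagLeffler,
    ← tsum_mul_left]
  congr 1
  · simp only [pow_zero, CharP.cast_eq_zero, zero_mul, zero_add]
  · refine tsum_congr fun k => ?_
    rw [pow_succ', mul_div_assoc, show ((k + 1 : ℕ) : ℝ) * α + β = k * α + (β + α) by
      push_cast; ring]

end Series

/-! ### Fractional integrals of the Mittag-Leffler function -/

section Beta

variable {p q t : ℝ} (hp : 0 < p) (hq : 0 < q) (ht : 0 < t)

include hp hq ht

theorem integral_rpow_mul_sub_rpow :
    ∫ s in 0..t, s ^ (p - 1) * (t - s) ^ (q - 1)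
      = t ^ (p + q - 1) * (Gamma p * Gamma q / Gamma (p + q)) := by
  have h_cast : ∀ s ∈ uIcc 0 t, (s : ℂ) ^ ((p : ℂ) - 1) * ((t : ℂ) - s) ^ ((q : ℂ) - 1)
      = ((s ^ (p - 1) * (t - s) ^ (q - 1) : ℝ) : ℂ) := fun s hs => by
    rw [uIcc_of_le ht.le] at hs
    push_cast [Complex.ofReal_cpow hs.1, Complex.ofReal_cpow (sub_nonneg.2 hs.2)]
    rfl
  have h_beta := Complex.betaIntegral_scaled p q ht
  rw [integral_congr h_cast, intervalIntegral.integral_ofReal,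
    Complex.betaIntegral_eq_Gamma_mul_div _ _ (by simpa) (by simpa), ← Complex.ofReal_add,
    Complex.Gamma_ofReal, Complex.Gamma_ofReal, Complex.Gamma_ofReal, ← Complex.ofReal_one,
    ← Complex.ofReal_sub, ← Complex.ofReal_cpow ht.le] at h_beta
  exact_mod_cast h_beta

theorem intervalIntegrable_rpow_mul_sub_rpow :
    IntervalIntegrable (fun s => s ^ (p - 1) * (t - s) ^ (q - 1)) volume 0 t := by
  refine intervalIntegrable_of_integral_ne_zero ?_
  rw [integral_rpow_mul_sub_rpow hp hq ht]
  have := Gamma_pos_of_pos hp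
  have := Gamma_pos_of_pos hq
  have := Gamma_pos_of_pos (add_pos hp hq)
  positivity

end Beta

section FractionalIntegral

variable {α β γ t : ℝ} (hα : 0 < α) (hβ : 0 < β) (hγ : 0 < γ) (ht : 0 < t)

include hα hβ hγ ht

theorem integral_pow_div_Gamma_mul (lam : ℝ) (k : ℕ) :
    ∫ s in 0..t, (lam * s ^ α) ^ k / Gamma (k * α + β) * (s ^ (β - 1) * (t - s) ^ (γ - 1))
      = Gamma γ * t ^ (β + γ - 1) * ((lam * t ^ α) ^ k / Gamma (k * α + (β + γ))) := by
  have hkβ : 0 < k * α + β := by positivity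
  have h_Gamma := (Gamma_pos_of_pos hkβ).ne'
  have h_rpow : ∀ δ {s : ℝ}, 0 < s → (s ^ α) ^ k * s ^ δ = s ^ (k * α + δ) := fun δ s hs => by
    rw [rpow_add hs, mul_comm _ α, rpow_mul hs.le, rpow_natCast]
  have h_term : ∀ s ∈ Ioo 0 t,
      (lam * s ^ α) ^ k / Gamma (k * α + β) * (s ^ (β - 1) * (t - s) ^ (γ - 1))
        = lam ^ k / Gamma (k * α + β) * (s ^ (k * α + β - 1) * (t - s) ^ (γ - 1)) :=
    fun s hs => by
      rw [add_sub_assoc, ← h_rpow _ hs.1, mul_pow]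
      ring
  rw [integral_of_le ht.le, integral_Ioc_eq_integral_Ioo,
    setIntegral_congr_fun measurableSet_Ioo h_term, ← integral_Ioc_eq_integral_Ioo,
    ← integral_of_le ht.le, intervalIntegral.integral_const_mul,
    integral_rpow_mul_sub_rpow hkβ hγ ht, add_assoc, add_sub_assoc, ← h_rpow _ ht, mul_pow]
  field_simp

theorem intervalIntegrable_mul_mittagLeffler (lam : ℝ) :
    IntervalIntegrable
      (fun s => mittagLeffler α β (lam * s ^ α) * (s ^ (β - 1) * (t - s) ^ (γ - 1)))
      volume 0 t :=
  (intervalIntegrable_rpow_mul_sub_rpow hβ hγ ht).continuousOn_mul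
    (continuous_mittagLeffler_mul_rpow hα β lam).continuousOn

theorem integral_mul_mittagLeffler (lam : ℝ) :
    ∫ s in 0..t, mittagLeffler α β (lam * s ^ α) * (s ^ (β - 1) * (t - s) ^ (γ - 1))
      = Gamma γ * t ^ (β + γ - 1) * mittagLeffler α (β + γ) (lam * t ^ α) := by
  set F : ℕ → ℝ → ℝ := fun k s =>
    (lam * s ^ α) ^ k / Gamma (k * α + β) * (s ^ (β - 1) * (t - s) ^ (γ - 1)) with hF
  have hF_int : ∀ k, Integrable (F k) (volume.restrict (Ioc 0 t)) := fun k => by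
    refine (intervalIntegrable_iff_integrableOn_Ioc_of_le ht.le).1
      ((intervalIntegrable_rpow_mul_sub_rpow hβ hγ ht).continuousOn_mul ?_)
    have : Continuous fun s : ℝ => s ^ α := continuous_rpow_const hα.le
    fun_prop
  have hF_norm : ∀ k, ∫ s in Ioc 0 t, ‖F k s‖
      = Gamma γ * t ^ (β + γ - 1) * ((|lam| * t ^ α) ^ k / Gamma (k * α + (β + γ))) := fun k => by
    rw [← integral_pow_div_Gamma_mul hα hβ hγ ht, integral_of_le ht.le]
    refine setIntegral_congr_fun measurableSet_Ioc fun s hs => ?_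
    have h_Gamma : 0 < Gamma (k * α + β) := Gamma_pos_of_pos (by positivity)
    have h_weight : 0 ≤ s ^ (β - 1) * (t - s) ^ (γ - 1) :=
      mul_nonneg (rpow_nonneg hs.1.le _) (rpow_nonneg (sub_nonneg.2 hs.2) _)
    simp only [hF, norm_mul, norm_div, norm_pow]
    rw [← norm_mul (s ^ (β - 1)), norm_of_nonneg h_weight, norm_of_nonneg h_Gamma.le,
      norm_of_nonneg (rpow_nonneg hs.1.le α), norm_eq_abs]
  have hF_summable : Summable fun k => ∫ s in Ioc 0 t, ‖F k s‖ := by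
    simp only [hF_norm]
    exact (summable_pow_div_Gamma hα _ _).mul_left _
  calc ∫ s in 0..t, mittagLeffler α β (lam * s ^ α) * (s ^ (β - 1) * (t - s) ^ (γ - 1))
      = ∫ s in Ioc 0 t, ∑' k, F k s := by
        simp only [integral_of_le ht.le, mittagLeffler, hF, tsum_mul_right]
    _ = ∑' k, ∫ s in Ioc 0 t, F k s :=
        (integral_tsum_of_summable_integral_norm hF_int hF_summable).symm
    _ = Gamma γ * t ^ (β + γ - 1) * mittagLeffler α (β + γ) (lam * t ^ α) := by
        simp only [← integral_of_le ht.le, hF, integral_pow_div_Gamma_mul hα hβ hγ ht,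
          tsum_mul_left, mittagLeffler]

end FractionalIntegral

/-! ### Positivity and boundedness on the negative half-line -/

section Bound

variable {α : ℝ} (hα : 0 < α)

include hα

theorem isVolterraResolvent_mittagLeffler :
    IsVolterraResolvent (Gamma α) (fun t => t ^ (α - 1))
      (fun t => mittagLeffler α α (-1 * t ^ α) * t ^ (α - 1)) where
  intervalIntegrable t ht := by
    simpa only [mul_assoc] using intervalIntegrable_mul_mittagLeffler hα hα hα ht (-1)
  add_integral_eq t ht := by
    have h_Gamma := (Gamma_pos_of_pos hα).ne'
    have h_rpow : t ^ (α + α - 1) = t ^ α * t ^ (α - 1) := by rw [add_sub_assoc, rpow_add ht]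
    simp only [mul_assoc (mittagLeffler _ _ _)]
    rw [integral_mul_mittagLeffler hα hα hα ht, mittagLeffler_eq_add hα α, h_rpow]
    field_simp
    ring

variable (hα_le : α ≤ 1)

include hα_le

theorem mittagLeffler_neg_pos {x : ℝ} (hx : 0 < x) : 0 < mittagLeffler α α (-x) := by
  have h_cont := continuous_mittagLeffler_mul_rpow hα α (-1)
  have h_log : ConvexOn ℝ (Ioi 0) fun s : ℝ => log (s ^ (α - 1)) :=
    (strictConcaveOn_log_Ioi.concaveOn.neg.smul (sub_nonneg.2 hα_le)).congr fun s hs => by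
      simp only [Pi.neg_apply, smul_eq_mul, log_rpow (mem_Ioi.1 hs)]
      ring
  have h_zero : ∀ᶠ t : ℝ in 𝓝[>] 0, 0 < mittagLeffler α α (-1 * t ^ α) * t ^ (α - 1) := by
    have h_init : 0 < mittagLeffler α α (-1 * (0 : ℝ) ^ α) := by
      rw [zero_rpow hα.ne', mul_zero, mittagLeffler_zero]
      exact one_div_pos.2 (Gamma_pos_of_pos hα)
    filter_upwards [nhdsWithin_le_nhds (h_cont.continuousAt.eventually_const_lt h_init),
      self_mem_nhdsWithin] with t hE ht using mul_pos hE (rpow_pos_of_pos ht _)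
  have h_pos := (isVolterraResolvent_mittagLeffler hα).pos (Gamma_pos_of_pos hα)
    (fun s hs => rpow_pos_of_pos hs _) h_log (fun t _ => intervalIntegrable_rpow' (by linarith))
    (h_cont.continuousOn.mul (continuousOn_id.rpow_const fun s hs => Or.inl (ne_of_gt hs)))
    h_zero (rpow_pos_of_pos hx α⁻¹)
  rw [rpow_inv_rpow hx.le hα.ne', neg_one_mul] at h_pos
  exact pos_of_mul_pos_left h_pos (by positivity)

theorem abs_mittagLeffler_neg_le {x : ℝ} (hx : 0 < x) :
    |mittagLeffler α α (-x)| ≤ 1 / Gamma α := by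
  have ht : 0 < x ^ α⁻¹ := rpow_pos_of_pos hx _
  have h_le := (isVolterraResolvent_mittagLeffler hα).mul_le_kernel
    (fun s hs => rpow_nonneg hs.le _) ht fun s hs => by
      rw [neg_one_mul]
      exact mul_nonneg (mittagLeffler_neg_pos hα hα_le (rpow_pos_of_pos hs.1 α)).le
        (rpow_nonneg hs.1.le _)
  rw [rpow_inv_rpow hx.le hα.ne', neg_one_mul, ← mul_assoc,
    mul_le_iff_le_one_left (rpow_pos_of_pos ht _)] at h_le
  rwa [abs_of_pos (mittagLeffler_neg_pos hα hα_le hx), le_div_iff₀' (Gamma_pos_of_pos hα)]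

end Bound

theorem integral_abs_mittagLeffler_bound (α : ℝ) (hα0 : 0 < α) (hα1 : α ≤ 1) :
    ∃ C : ℝ, 0 < C ∧ ∀ lam T : ℝ, 0 < lam → 0 < T →
      (∫ t in (0:ℝ)..T, t ^ (α - 1) * |mittagLeffler α α (-lam * t ^ α)|)
        ≤ C * T ^ α / α := by
  refine ⟨1 / Gamma α, one_div_pos.2 (Gamma_pos_of_pos hα0), fun lam T hlam hT => ?_⟩
  have h_rpow : IntervalIntegrable (fun t : ℝ => t ^ (α - 1)) volume 0 T :=
    intervalIntegrable_rpow' (by linarith)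
  calc ∫ t in (0:ℝ)..T, t ^ (α - 1) * |mittagLeffler α α (-lam * t ^ α)|
      ≤ ∫ t in (0:ℝ)..T, t ^ (α - 1) * (1 / Gamma α) := by
        refine integral_mono_on_of_le_Ioo hT.le (h_rpow.mul_continuousOn
          (continuous_mittagLeffler_mul_rpow hα0 α (-lam)).abs.continuousOn)
          (h_rpow.mul_const _) fun t ht => ?_
        rw [neg_mul]
        exact mul_le_mul_of_nonneg_left
          (abs_mittagLeffler_neg_le hα0 hα1 (mul_pos hlam (rpow_pos_of_pos ht.1 α)))
          (rpow_nonneg ht.1.le _)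
    _ = 1 / Gamma α * T ^ α / α := by
        rw [intervalIntegral.integral_mul_const, integral_rpow (Or.inl (by linarith)),
          sub_add_cancel, zero_rpow hα0.ne', sub_zero]
        ring
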